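/- Let α > -1, 0 < t ≤ 2, b ≠ 0, and n ≥ 2. Define S_n(x) = L_n^α(x) + b·L_{n-1}^{α+t}(x). If y and y' are consecutive zeros of L_{n-1}^{α+t}, then S_n(y)·S_n(y') < 0; hence the zeros of S_n interlace with the zeros of L_{n-1}^{α+t}. -/

import Mathlib

open Finset

/-- Generalized Laguerre polynomial `L_n^α(x) = ∑_{k=0}^n (-1)^k C(n+α, n-k) x^k / k!`,
where `C(n+α, n-k) = (∏_{i=1}^{n-k} (α+k+i)) / (n-k)!`. -/
noncomputable def laguerre (α : ℝ) (n : ℕ) (x : ℝ) : ℝ :=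
  ∑ k ∈ Finset.range (n + 1),
    (-1 : ℝ) ^ k * (∏ i ∈ Finset.range (n - k), (α + k + 1 + i)) /
      ((Nat.factorial (n - k) : ℝ) * (Nat.factorial k : ℝ)) * x ^ k

theorem laguerre_zero (β x : ℝ) : laguerre β 0 x = 1 := by
  simp [laguerre]

theorem laguerre_succ_add_one (β : ℝ) (n : ℕ) (x : ℝ) :
    laguerre (β + 1) (n + 1) x = laguerre β (n + 1) x + laguerre (β + 1) n x := by
  unfold laguerre
  rw [sum_range_succ _ (n + 1), sum_range_succ _ (n + 1), add_right_comm (Finset.sum _ _), ← sum_add_distrib]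
  congr 1
  · refine sum_congr rfl fun k hk => ?_
    obtain ⟨d, rfl⟩ := Nat.exists_eq_add_of_le (Nat.lt_succ_iff.1 (mem_range.1 hk))
    have h1 : k + d + 1 - k = d + 1 := by omega
    have h2 : k + d - k = d := by omega
    rw [h1, h2, prod_range_succ, prod_range_succ' _ d, Nat.factorial_succ]
    have h3 : ∏ i ∈ range d, (β + k + 1 + (i + 1 : ℕ)) = ∏ i ∈ range d, (β + 1 + k + 1 + i) :=
      prod_congr rfl fun i _ => by push_cast; ring
    rw [h3]
    have := Nat.factorial_ne_zero d
    have := Nat.factorial_ne_zero k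
    push_cast
    field_simp
    ring
  · simp

/-- Termwise form of `(L_{n+1}^β)' = -L_n^{β+1}`. -/
theorem laguerre_coeff_shift (β : ℝ) (n k : ℕ) :
    ((-1 : ℝ) ^ (k + 1) * (∏ i ∈ range (n + 1 - (k + 1)), (β + (k + 1 : ℕ) + 1 + i)) /
      (((n + 1 - (k + 1)).factorial : ℝ) * ((k + 1).factorial : ℝ))) * ((k + 1 : ℕ) : ℝ) =
    -((-1 : ℝ) ^ k * (∏ i ∈ range (n - k), (β + 1 + k + 1 + i)) /
      (((n - k).factorial : ℝ) * (k.factorial : ℝ))) := by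
  have h3 : ∏ i ∈ range (n - k), (β + (k + 1 : ℕ) + 1 + i) =
      ∏ i ∈ range (n - k), (β + 1 + k + 1 + i) :=
    prod_congr rfl fun i _ => by push_cast; ring
  rw [Nat.add_sub_add_right, h3, Nat.factorial_succ k]
  have := Nat.factorial_ne_zero (n - k)
  have := Nat.factorial_ne_zero k
  push_cast
  field_simp
  ring

theorem laguerre_succ (β : ℝ) (n : ℕ) (x : ℝ) :
    (n + 1) * laguerre β (n + 1) x =
      (n + 1 + β) * laguerre β n x - x * laguerre (β + 1) n x := by
  have key : ∀ k ∈ range (n + 1), (n + 1 + β) * ((-1 : ℝ) ^ k *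
      (∏ i ∈ range (n - k), (β + k + 1 + i)) / (((n - k).factorial : ℝ) * (k.factorial : ℝ))
        * x ^ k) = (n + 1 - k) * ((-1 : ℝ) ^ k * (∏ i ∈ range (n + 1 - k), (β + k + 1 + i)) /
      (((n + 1 - k).factorial : ℝ) * (k.factorial : ℝ)) * x ^ k) := by
    intro k hk
    obtain ⟨d, rfl⟩ := Nat.exists_eq_add_of_le (Nat.lt_succ_iff.1 (mem_range.1 hk))
    have h1 : k + d + 1 - k = d + 1 := by omega
    have h2 : k + d - k = d := by omega
    rw [h1, h2, prod_range_succ, Nat.factorial_succ]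
    have := Nat.factorial_ne_zero d
    have := Nat.factorial_ne_zero k
    push_cast
    field_simp
    ring
  have shift : ∀ k ∈ range (n + 1), ((-1 : ℝ) ^ k *
      (∏ i ∈ range (n - k), (β + 1 + k + 1 + i)) / (((n - k).factorial : ℝ) * (k.factorial : ℝ))
        * x ^ k) * x = -(((k + 1 : ℕ) : ℝ) * ((-1 : ℝ) ^ (k + 1) *
      (∏ i ∈ range (n + 1 - (k + 1)), (β + (k + 1 : ℕ) + 1 + i)) /
      (((n + 1 - (k + 1)).factorial : ℝ) * ((k + 1).factorial : ℝ)) * x ^ (k + 1))) := by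
    intro k _
    have := laguerre_coeff_shift β n k
    linear_combination (x ^ (k + 1)) * this
  unfold laguerre
  rw [mul_comm x, sum_mul, sum_congr rfl shift, mul_sum _ _ ((n : ℝ) + 1 + β),
    sum_congr rfl key, mul_sum, sum_neg_distrib, sub_neg_eq_add]
  have e := sum_range_succ' (fun k : ℕ => (k : ℝ) * ((-1 : ℝ) ^ k *
      (∏ i ∈ range (n + 1 - k), (β + k + 1 + i)) /
      (((n + 1 - k).factorial : ℝ) * (k.factorial : ℝ)) * x ^ k)) (n + 1)
  simp only [Nat.cast_zero, zero_mul, add_zero] at e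
  rw [← e, sum_range_succ _ (n + 1), sum_range_succ _ (n + 1), ← add_assoc, ← sum_add_distrib]
  congr 1
  · exact sum_congr rfl fun k _ => by ring
  · push_cast; ring

theorem hasDerivAt_laguerre_succ (β : ℝ) (n : ℕ) (x : ℝ) :
    HasDerivAt (laguerre β (n + 1)) (-laguerre (β + 1) n x) x := by
  have h : HasDerivAt (laguerre β (n + 1)) (∑ k ∈ range (n + 1 + 1),
      (-1 : ℝ) ^ k * (∏ i ∈ range (n + 1 - k), (β + k + 1 + i)) /
      (((n + 1 - k).factorial : ℝ) * (k.factorial : ℝ)) * (k * x ^ (k - 1))) x :=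
    HasDerivAt.fun_sum fun k _ => (hasDerivAt_pow k x).const_mul _
  convert h using 1
  rw [sum_range_succ']
  simp only [Nat.cast_zero, zero_mul, mul_zero, add_zero, laguerre]
  rw [← sum_neg_distrib]
  refine sum_congr rfl fun k _ => ?_
  have := laguerre_coeff_shift β n k
  rw [← mul_assoc, this, Nat.add_sub_cancel]
  ring

theorem laguerre_add_two (β : ℝ) (n : ℕ) (x : ℝ) :
    (n + 1 + β) * laguerre β n x =
      (β + 1 + x) * laguerre (β + 1) n x - x * laguerre (β + 1 + 1) n x := by
  cases n with
  | zero => simp only [laguerre_zero]; push_cast; ring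
  | succ m =>
    have h1 := laguerre_succ_add_one β m x
    have h2 := laguerre_succ_add_one (β + 1) m x
    have h3 := laguerre_succ (β + 1) m x
    push_cast
    linear_combination -(m + 2 + β) * h1 + x * h2 + h3

theorem laguerre_pos_of_nonpos {x : ℝ} (hx : x ≤ 0) (n : ℕ) :
    ∀ β : ℝ, -1 < β → 0 < laguerre β n x := by
  induction n with
  | zero => intro β _; rw [laguerre_zero]; exact one_pos
  | succ n ih =>
    intro β hβ
    have h := laguerre_succ β n x
    have h1 := mul_pos (show (0 : ℝ) < n + 1 + β by
      linarith [n.cast_nonneg (α := ℝ)]) (ih β hβ)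
    have h2 := mul_nonneg (neg_nonneg.2 hx) (ih (β + 1) (by linarith)).le
    exact pos_of_mul_pos_right (a := (n : ℝ) + 1) (by linarith) (by positivity)

theorem laguerre_pos_of_large {x : ℝ} (hx : 0 ≤ x) (n : ℕ) :
    ∀ β : ℝ, 2 * x + n + 1 ≤ β →
      0 < laguerre β n x ∧ laguerre (β + 1) n x ≤ 2 * laguerre β n x := by
  induction n with
  | zero => intro β _; simp only [laguerre_zero]; norm_num
  | succ n ih =>
    intro β hβ
    push_cast at hβ
    obtain ⟨hpos, hle⟩ := ih β (by linarith)
    have h := laguerre_succ β n x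
    have h1 := laguerre_succ_add_one β n x
    have hn : (0 : ℝ) < n + 1 := by positivity
    have h2 : 2 * laguerre β n x ≤ laguerre β (n + 1) x := by
      refine le_of_mul_le_mul_left ?_ hn
      nlinarith [mul_le_mul_of_nonneg_left hle hx]
    constructor <;> linarith

/-- Log-concavity of `β ↦ L_{n+1}^β(x)` across steps of length at most one. -/
theorem laguerre_parameter_det_pos {x : ℝ} (hx : 0 < x) (n : ℕ) :
    ∀ β γ : ℝ, -1 < β → β < γ → γ ≤ β + 1 →
      0 < laguerre γ (n + 1) x * laguerre (β + 1) (n + 1) x -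
        laguerre β (n + 1) x * laguerre (γ + 1) (n + 1) x := by
  induction n with
  | zero =>
    intro β γ _ h _
    have e : ∀ δ : ℝ, laguerre δ (0 + 1) x = 1 + δ - x := fun δ => by
      have := laguerre_succ δ 0 x
      simp only [laguerre_zero] at this
      push_cast at this
      linarith
    simp only [e]
    linarith
  | succ n ih =>
    intro β γ hβ hβγ hγ
    have r1 := laguerre_succ β (n + 1) x
    have r2 := laguerre_succ γ (n + 1) x
    have s1 := laguerre_succ_add_one β (n + 1) x
    have s2 := laguerre_succ_add_one γ (n + 1) x
    have t1 := laguerre_add_two β (n + 1) x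
    have t2 := laguerre_add_two γ (n + 1) x
    have hdet := ih β γ hβ hβγ hγ
    have hdet' := ih (β + 1) (γ + 1) (by linarith) (by linarith) (by linarith)
    have hn : (0 : ℝ) < ((n + 1 : ℕ) : ℝ) + 1 := by positivity
    refine pos_of_mul_pos_right (a := ((n + 1 : ℕ) : ℝ) + 1) ?_ hn.le
    rw [s1, s2]
    have expand : (((n + 1 : ℕ) : ℝ) + 1) * (laguerre γ (n + 1 + 1) x *
        (laguerre β (n + 1 + 1) x + laguerre (β + 1) (n + 1) x) - laguerre β (n + 1 + 1) x *
        (laguerre γ (n + 1 + 1) x + laguerre (γ + 1) (n + 1) x)) =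
        (((n + 1 : ℕ) : ℝ) + 1 + γ) * laguerre γ (n + 1) x * laguerre (β + 1) (n + 1) x -
        (((n + 1 : ℕ) : ℝ) + 1 + β) * laguerre β (n + 1) x * laguerre (γ + 1) (n + 1) x := by
      linear_combination laguerre (β + 1) (n + 1) x * r2 - laguerre (γ + 1) (n + 1) x * r1
    rw [expand]
    set u : ℝ → ℝ := fun δ => laguerre δ (n + 1) x with hu
    change 0 < (_ + _ + γ) * u γ * u (β + 1) - (_ + _ + β) * u β * u (γ + 1)
    change _ * u β = _ * u (β + 1) - _ * u (β + 1 + 1) at t1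
    change _ * u γ = _ * u (γ + 1) - _ * u (γ + 1 + 1) at t2
    change 0 < u γ * u (β + 1) - u β * u (γ + 1) at hdet
    change 0 < u (γ + 1) * u (β + 1 + 1) - u (β + 1) * u (γ + 1 + 1) at hdet'
    rcases le_or_gt 0 (u γ * u (β + 1)) with h1 | h1
    · have hz : (0 : ℝ) < ((n + 1 : ℕ) : ℝ) + 1 + β := by
        linarith [(n + 1).cast_nonneg (α := ℝ)]
      nlinarith [mul_pos hz hdet, mul_nonneg (sub_nonneg.2 hβγ.le) h1]
    rcases le_or_gt 0 (u (β + 1) * u (γ + 1)) with h2 | h2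
    · rw [t1, t2]
      nlinarith [mul_pos hx hdet', mul_nonneg (sub_nonneg.2 hβγ.le) h2]
    exfalso
    have hlt : γ < β + 1 := by
      refine lt_of_le_of_ne hγ fun h => ?_
      rw [h] at h1
      exact absurd h1 (not_lt.2 (mul_self_nonneg _))
    have alternate : ∀ k : ℕ, u (γ + k) * u (β + k + 1) < 0 ∧
        u (β + k + 1) * u (γ + k + 1) < 0 := by
      intro k
      induction k with
      | zero => simpa using ⟨h1, h2⟩
      | succ k hk =>
        obtain ⟨ha, hb⟩ := hk
        have hk0 : (0 : ℝ) ≤ k := k.cast_nonneg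
        have d1 : 0 < u (β + k + 1) * u (γ + k + 1) - u (γ + k) * u (β + k + 1 + 1) :=
          ih (γ + k) (β + k + 1) (by linarith) (by linarith) (by linarith)
        have d2 : 0 < u (γ + k + 1) * u (β + k + 1 + 1) - u (β + k + 1) * u (γ + k + 1 + 1) :=
          ih (β + k + 1) (γ + k + 1) (by linarith) (by linarith) (by linarith)
        push_cast
        rw [← add_assoc, ← add_assoc]
        have sq : ∀ {a b c d : ℝ}, a * b < 0 → b * c < 0 → 0 < b * c - a * d → c * d < 0 := by
          intro a b c d hab hbc hd
          have had : a * d < 0 := by linarith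
          by_contra! hcd
          nlinarith [mul_pos_of_neg_of_neg had hbc, mul_nonneg (neg_nonneg.2 hab.le) hcd]
        have e1 := sq ha hb d1
        exact ⟨e1, sq hb e1 d2⟩
    obtain ⟨k, hk⟩ := exists_nat_ge (2 * x + ((n + 1 : ℕ) : ℝ) + 3)
    have p1 := (laguerre_pos_of_large hx.le (n + 1) (γ + k) (by linarith)).1
    have p2 := (laguerre_pos_of_large hx.le (n + 1) (β + k + 1) (by linarith)).1
    exact absurd (alternate k).1 (not_lt.2 (mul_pos p1 p2).le)

theorem wronskian_pos_zero {α : ℝ} (hα : -1 < α) (x : ℝ) (n : ℕ) :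
    0 < laguerre (α + 1) (n + 1) x * laguerre α n x -
      laguerre α (n + 1) x * laguerre (α + 1) n x := by
  induction n with
  | zero => simp [laguerre_succ_add_one, laguerre_zero]
  | succ n ih =>
    have r1 := laguerre_succ α n x
    have r2 := laguerre_succ α (n + 1) x
    have s1 := laguerre_succ_add_one α n x
    have s2 := laguerre_succ_add_one α (n + 1) x
    refine pos_of_mul_pos_right (a := ((n + 1 : ℕ) : ℝ) + 1) ?_ (by positivity)
    have hz : (0 : ℝ) < n + 1 + α := by linarith [n.cast_nonneg (α := ℝ)]
    have := mul_pos hz ih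
    push_cast at *
    have e : (n + 1 + 1 : ℝ) * (laguerre (α + 1) (n + 1 + 1) x * laguerre α (n + 1) x -
      laguerre α (n + 1 + 1) x * laguerre (α + 1) (n + 1) x) = laguerre α (n + 1) x ^ 2 +
      (n + 1 + α) * (laguerre (α + 1) (n + 1) x * laguerre α n x -
      laguerre α (n + 1) x * laguerre (α + 1) n x) := by
      grind
    rw [e]
    positivity

theorem wronskian_two_recurrence (α x : ℝ) (m : ℕ) :
    (m + 1) * ((m + 2) * (laguerre (α + 1) (m + 2) x * laguerre (α + 1 + 1) (m + 1) x -
      laguerre α (m + 2) x * laguerre (α + 1 + 1 + 1) (m + 1) x) -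
      laguerre (α + 1 + 1) (m + 1) x ^ 2) =
    (m + 2 + α) * ((m + 1) * (laguerre (α + 1) (m + 1) x * laguerre (α + 1 + 1) m x -
      laguerre α (m + 1) x * laguerre (α + 1 + 1 + 1) m x) - laguerre (α + 1 + 1) m x ^ 2) +
    (α + 1) * laguerre (α + 1 + 1) m x ^ 2 := by
  have r1 := laguerre_succ α (m + 1) x
  have r2 := laguerre_succ (α + 1) (m + 1) x
  have r3 := laguerre_succ (α + 1) m x
  have s0 := laguerre_succ_add_one α m x
  have s1 := laguerre_succ_add_one (α + 1) m x
  have s2 := laguerre_succ_add_one (α + 1 + 1) m x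
  have t := laguerre_add_two (α + 1) m x
  push_cast at r1 r2
  grind

theorem wronskian_pos_two {α : ℝ} (hα : -1 < α) (x : ℝ) (m : ℕ) :
    0 < laguerre (α + 1) (m + 1) x * laguerre (α + 1 + 1) m x -
      laguerre α (m + 1) x * laguerre (α + 1 + 1 + 1) m x := by
  have base : laguerre (α + 1) (0 + 1) x * laguerre (α + 1 + 1) 0 x -
      laguerre α (0 + 1) x * laguerre (α + 1 + 1 + 1) 0 x = 1 := by
    simp only [laguerre_succ_add_one α, laguerre_zero]
    ring
  have refined : ∀ k : ℕ, 0 < ((k : ℝ) + 2) * (laguerre (α + 1) (k + 2) x *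
      laguerre (α + 1 + 1) (k + 1) x - laguerre α (k + 2) x *
      laguerre (α + 1 + 1 + 1) (k + 1) x) - laguerre (α + 1 + 1) (k + 1) x ^ 2 := by
    intro k
    induction k with
    | zero =>
      have h := wronskian_two_recurrence α x 0
      rw [base, laguerre_zero] at h
      push_cast at h ⊢
      linarith
    | succ k ih =>
      have h := wronskian_two_recurrence α x (k + 1)
      have hk : (0 : ℝ) < (k + 1 : ℕ) + 2 + α := by
        linarith [(k + 1).cast_nonneg (α := ℝ)]
      have hα' : 0 ≤ α + 1 := by linarith
      have h1 := mul_pos hk ih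
      have h2 := mul_nonneg hα' (sq_nonneg (laguerre (α + 1 + 1) (k + 1) x))
      refine pos_of_mul_pos_right (a := ((k + 1 : ℕ) : ℝ) + 1) ?_ (by positivity)
      rw [h]
      push_cast at h1 ⊢
      linarith
  cases m with
  | zero => rw [base]; exact one_pos
  | succ k =>
    have h := refined k
    have h2 := sq_nonneg (laguerre (α + 1 + 1) (k + 1) x)
    exact pos_of_mul_pos_right (a := (k : ℝ) + 2) (by linarith) (by positivity)

/-- Positivity at two parameters at unit distance propagates to the parameters between them. -/
theorem laguerre_parameter_interpolation {x : ℝ} (hx : 0 < x) (n : ℕ) {β γ c d : ℝ}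
    (hβ : -1 < β) (hβγ : β < γ) (hγ : γ < β + 1)
    (h0 : 0 < c * laguerre β (n + 1) x - d * laguerre (β + 1) (n + 1) x)
    (h1 : 0 < c * laguerre (β + 1) (n + 1) x - d * laguerre (β + 1 + 1) (n + 1) x) :
    0 < c * laguerre γ (n + 1) x - d * laguerre (γ + 1) (n + 1) x := by
  have k := laguerre_parameter_det_pos hx n β (β + 1) hβ (by linarith) le_rfl
  have k0 := laguerre_parameter_det_pos hx n β γ hβ hβγ hγ.le
  have k1 := laguerre_parameter_det_pos hx n γ (β + 1) (by linarith) hγ (by linarith)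
  refine pos_of_mul_pos_right ?_ k.le
  linarith [mul_pos k1 h0, mul_pos k0 h1]

theorem wronskian_pos {α t x : ℝ} (hα : -1 < α) (ht0 : 0 ≤ t) (ht2 : t ≤ 2) (hx : 0 < x)
    (m : ℕ) : 0 < laguerre (α + 1) (m + 2) x * laguerre (α + t) (m + 1) x -
      laguerre α (m + 2) x * laguerre (α + t + 1) (m + 1) x := by
  have e0 := wronskian_pos_zero hα x (m + 1)
  have e1 : 0 < laguerre (α + 1) (m + 2) x * laguerre (α + 1) (m + 1) x -
      laguerre α (m + 2) x * laguerre (α + 1 + 1) (m + 1) x := by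
    have h := laguerre_parameter_det_pos hx (m + 1) α (α + 1) hα (by linarith) le_rfl
    have s0 := laguerre_succ_add_one α (m + 1) x
    have s1 := laguerre_succ_add_one (α + 1) (m + 1) x
    convert h using 1
    linear_combination laguerre α (m + 2) x * s1 - laguerre (α + 1) (m + 2) x * s0
  have e2 := wronskian_pos_two hα x (m + 1)
  rcases ht0.eq_or_lt with rfl | ht0
  · simpa using e0
  rcases lt_trichotomy t 1 with ht1 | rfl | ht1
  · exact laguerre_parameter_interpolation hx m hα (by linarith) (by linarith) e0 e1
  · exact e1
  rcases ht2.eq_or_lt with rfl | ht2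
  · convert e2 using 4 <;> ring
  · exact laguerre_parameter_interpolation hx m (by linarith) (by linarith) (by linarith) e1 e2

theorem deriv_nonneg_of_pos_right {p : ℝ → ℝ} {p' a b : ℝ} (hab : a < b)
    (hp : HasDerivAt p p' a) (ha : p a = 0) (hpos : ∀ u ∈ Set.Ioo a b, 0 < p u) : 0 ≤ p' := by
  have h := (hasDerivAt_iff_tendsto_slope.1 hp).mono_left
    (nhdsWithin_mono a (fun u (hu : u ∈ Set.Ioi a) => hu.ne'))
  refine ge_of_tendsto h ?_
  filter_upwards [Ioo_mem_nhdsGT hab] with u hu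
  rw [slope_def_field, ha, sub_zero]
  exact div_nonneg (hpos u hu).le (sub_nonneg.2 hu.1.le)

theorem deriv_nonpos_of_pos_left {p : ℝ → ℝ} {p' a b : ℝ} (hab : a < b)
    (hp : HasDerivAt p p' b) (hb : p b = 0) (hpos : ∀ u ∈ Set.Ioo a b, 0 < p u) : p' ≤ 0 := by
  have h := (hasDerivAt_iff_tendsto_slope.1 hp).mono_left
    (nhdsWithin_mono b (fun u (hu : u ∈ Set.Iio b) => hu.ne))
  refine le_of_tendsto h ?_
  filter_upwards [Ioo_mem_nhdsLT hab] with u hu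
  rw [slope_def_field, hb, sub_zero]
  exact div_nonpos_of_nonneg_of_nonpos (hpos u hu).le (sub_nonpos.2 hu.2.le)

theorem mul_neg_of_wronskian_pos {p q p' q' : ℝ → ℝ} {a b : ℝ} (hab : a < b)
    (hp : ∀ u, HasDerivAt p (p' u) u)
    (hw : ∀ u ∈ Set.Icc a b, 0 < q u * p' u - p u * q' u)
    (ha : p a = 0) (hb : p b = 0) (hpos : ∀ u ∈ Set.Ioo a b, 0 < p u) : q a * q b < 0 := by
  have wa := hw a (Set.left_mem_Icc.2 hab.le)
  have wb := hw b (Set.right_mem_Icc.2 hab.le)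
  rw [ha, zero_mul, sub_zero] at wa
  rw [hb, zero_mul, sub_zero] at wb
  exact mul_neg_of_pos_of_neg
    (pos_of_mul_pos_left wa (deriv_nonneg_of_pos_right hab (hp a) ha hpos))
    (neg_of_mul_pos_left wb (deriv_nonpos_of_pos_left hab (hp b) hb hpos))

/-- If the Wronskian of `p` and `q` is positive, then `q` changes sign exactly once between
consecutive zeros of `p`. -/
theorem sign_change_of_wronskian_pos {p q p' q' : ℝ → ℝ} {a b : ℝ} (hab : a < b)
    (hp : ∀ u, HasDerivAt p (p' u) u) (hq : ∀ u, HasDerivAt q (q' u) u)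
    (hw : ∀ u ∈ Set.Icc a b, 0 < q u * p' u - p u * q' u)
    (ha : p a = 0) (hb : p b = 0) (hne : ∀ u ∈ Set.Ioo a b, p u ≠ 0) :
    q a * q b < 0 ∧ ∃! z, z ∈ Set.Ioo a b ∧ q z = 0 := by
  have hcp : Continuous p := continuous_iff_continuousAt.2 fun u => (hp u).continuousAt
  have hcq : Continuous q := continuous_iff_continuousAt.2 fun u => (hq u).continuousAt
  have hsign : q a * q b < 0 := by
    have hconst : (∀ u ∈ Set.Ioo a b, 0 < p u) ∨ ∀ u ∈ Set.Ioo a b, p u < 0 := by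
      by_contra! h
      obtain ⟨⟨u, hu, hu'⟩, v, hv, hv'⟩ := h
      obtain ⟨w, hw, hw'⟩ := isPreconnected_Ioo.intermediate_value hu hv hcp.continuousOn
        ⟨hu', hv'⟩
      exact hne w hw hw'
    rcases hconst with hpos | hneg
    · exact mul_neg_of_wronskian_pos hab hp hw ha hb hpos
    · have := mul_neg_of_wronskian_pos (p := -p) (q := -q) (p' := -p') (q' := -q') hab
        (fun u => (hp u).neg) (fun u hu => by simpa using hw u hu) (by simp [ha]) (by simp [hb])
        (fun u hu => by simpa using hneg u hu)
      simpa using this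
  refine ⟨hsign, ?_⟩
  have hex : ∃ z ∈ Set.Ioo a b, q z = 0 := by
    rcases mul_neg_iff.1 hsign with ⟨h, h'⟩ | ⟨h, h'⟩
    · exact intermediate_value_Ioo' hab.le hcq.continuousOn ⟨h', h⟩
    · exact intermediate_value_Ioo hab.le hcq.continuousOn ⟨h, h'⟩
  obtain ⟨z, hz, hqz⟩ := hex
  have hanti : StrictAntiOn (fun u => q u / p u) (Set.Ioo a b) := by
    have hd : ∀ u ∈ Set.Ioo a b, HasDerivAt (fun u => q u / p u)
        ((q' u * p u - q u * p' u) / p u ^ 2) u := fun u hu => (hq u).div (hp u) (hne u hu)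
    refine strictAntiOn_of_deriv_neg (convex_Ioo a b)
      (fun u hu => (hd u hu).continuousAt.continuousWithinAt) fun u hu => ?_
    rw [interior_Ioo] at hu
    rw [(hd u hu).deriv]
    have := hw u (Set.Ioo_subset_Icc_self hu)
    exact div_neg_of_neg_of_pos (by linarith) (by have := hne u hu; positivity)
  exact ⟨z, ⟨hz, hqz⟩, fun w hw => hanti.injOn hw.1 hz (by simp [hqz, hw.2])⟩

theorem S_sign_change_at_zeros_of_shifted (α t b : ℝ) (hα : α > -1) (ht0 : 0 < t)
    (ht2 : t ≤ 2) (hb : b ≠ 0) (n : ℕ) (hn : 2 ≤ n)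
    (S : ℝ → ℝ) (hS : ∀ x, S x = laguerre α n x + b * laguerre (α + t) (n - 1) x)
    (y y' : ℝ) (hlt : y < y') (hy : laguerre (α + t) (n - 1) y = 0)
    (hy' : laguerre (α + t) (n - 1) y' = 0)
    (hcons : ∀ u ∈ Set.Ioo y y', laguerre (α + t) (n - 1) u ≠ 0) :
    S y * S y' < 0 ∧ ∃! z, z ∈ Set.Ioo y y' ∧ S z = 0 := by
  obtain ⟨m, rfl⟩ := Nat.exists_eq_add_of_le' hn
  rw [show m + 2 - 1 = m + 1 from rfl] at *
  have hy0 : 0 < y := by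
    by_contra! h
    exact (laguerre_pos_of_nonpos h (m + 1) (α + t) (by linarith)).ne' hy
  obtain rfl : S = fun x => laguerre α (m + 2) x + b * laguerre (α + t) (m + 1) x := funext hS
  refine sign_change_of_wronskian_pos hlt (hasDerivAt_laguerre_succ (α + t) m)
    (fun u => (hasDerivAt_laguerre_succ α (m + 1) u).add
      ((hasDerivAt_laguerre_succ (α + t) m u).const_mul b)) (fun u hu => ?_) hy hy' hcons
  have h := wronskian_pos hα ht0.le ht2 (hy0.trans_le hu.1) m
  have s0 := laguerre_succ_add_one α (m + 1) u
  have s1 := laguerre_succ_add_one (α + t) m u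
  convert h using 1
  simp only [Pi.add_apply]
  linear_combination laguerre α (m + 2) u * s1 - laguerre (α + t) (m + 1) u * s0
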